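/- arXiv:2602.14086 — 2 statements merged into one kernel-verified Lean document; each statement's English description precedes it below -/
import Mathlib

section
/- Let H be a separable Hilbert space and ν a probability measure on H with finite second moment. Let {μ_k} be a sequence of regular probability measures on H with finite second moments, and let T*_k denote the unique optimal transport map (for quadratic cost) from μ_k to ν. If μ_k converges to a probability measure μ in the Wasserstein-2 metric, then there exist a subsequence {k_n} and an optimal transport plan π* ∈ Π(μ,ν) for the quadratic cost such that the plans π*_{k_n} = (Id × T*_{k_n})_# μ_{k_n} converge weakly to π*. -/
open MeasureTheory ProbabilityTheory Filter Topology Metric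
open scoped ENNReal NNReal

noncomputable section

local notation "⟪" x ", " y "⟫" => @inner ℝ _ _ x y

/-- The quadratic cost `c(x,y) = (1/2)‖x−y‖²`. -/
def quadCost {E : Type*} [NormedAddCommGroup E] (x y : E) : ℝ := (1 / 2) * ‖x - y‖ ^ 2

/-- A nondegenerate Gaussian measure on an inner product space: every one-dimensional
projection is a real Gaussian with strictly positive variance (for nonzero directions). -/
def IsNondegGaussian {E : Type*} [NormedAddCommGroup E] [InnerProductSpace ℝ E]
    [MeasurableSpace E] (γ : Measure E) : Prop :=
  IsProbabilityMeasure γ ∧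
    ∀ h : E, ∃ (m : ℝ) (v : ℝ≥0), (h ≠ 0 → 0 < v) ∧
      γ.map (fun x => ⟪x, h⟫) = gaussianReal m v

/-- A Gaussian null set: a Borel set negligible for every nondegenerate Gaussian measure. -/
def IsGaussianNullSet {E : Type*} [NormedAddCommGroup E] [InnerProductSpace ℝ E]
    [MeasurableSpace E] (N : Set E) : Prop :=
  MeasurableSet N ∧ ∀ γ : Measure E, IsNondegGaussian γ → γ N = 0

/-- A regular measure: one assigning zero mass to every Gaussian null set. -/
def IsRegularMeasure {E : Type*} [NormedAddCommGroup E] [InnerProductSpace ℝ E]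
    [MeasurableSpace E] (μ : Measure E) : Prop :=
  ∀ N : Set E, IsGaussianNullSet N → μ N = 0

/-- Finite second moment. -/
def HasFiniteSecondMoment {E : Type*} [NormedAddCommGroup E] [MeasurableSpace E]
    (μ : Measure E) : Prop :=
  Integrable (fun x => ‖x‖ ^ 2) μ

/-- `π` is a coupling of `μ` and `ν`. -/
def IsCoupling {E : Type*} [MeasurableSpace E] (μ ν : Measure E) (π : Measure (E × E)) : Prop :=
  π.map Prod.fst = μ ∧ π.map Prod.snd = ν

/-- The Kantorovich optimal transport cost for the quadratic cost. -/
def kantorovichCost {E : Type*} [NormedAddCommGroup E] [MeasurableSpace E]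
    (μ ν : Measure E) : ℝ :=
  sInf {r : ℝ | ∃ π : Measure (E × E), IsCoupling μ ν π ∧ r = ∫ p, quadCost p.1 p.2 ∂π}

/-- The c-transform `V^c(x) = inf_y [c(x,y) − V(y)]`. -/
def cTransform {E : Type*} [NormedAddCommGroup E] (V : E → ℝ) (x : E) : ℝ :=
  ⨅ y : E, (quadCost x y - V y)

/-- c-concavity: `V` is the c-transform of some function. -/
def CConcave {E : Type*} [NormedAddCommGroup E] (V : E → ℝ) : Prop :=
  ∃ φ : E → ℝ, V = fun y => ⨅ x : E, (quadCost x y - φ x)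

/-- A Monge optimal transport map for the quadratic cost. -/
def IsMongeMap {E : Type*} [NormedAddCommGroup E] [MeasurableSpace E]
    (μ ν : Measure E) (T : E → E) : Prop :=
  Measurable T ∧ μ.map T = ν ∧
    ∀ S : E → E, Measurable S → μ.map S = ν →
      ∫ x, quadCost x (T x) ∂μ ≤ ∫ x, quadCost x (S x) ∂μ

/-- The Kantorovich dual functional `J(V) = ∫ V^c dμ + ∫ V dν`. -/
def dualValue {E : Type*} [NormedAddCommGroup E] [MeasurableSpace E]
    (μ ν : Measure E) (V : E → ℝ) : ℝ :=
  ∫ x, cTransform V x ∂μ + ∫ y, V y ∂ν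

/-- A Kantorovich potential: a c-concave function whose dual value equals the
Kantorovich optimal transport cost. -/
def IsKantorovichPotential {E : Type*} [NormedAddCommGroup E] [MeasurableSpace E]
    (μ ν : Measure E) (V : E → ℝ) : Prop :=
  CConcave V ∧ dualValue μ ν V = kantorovichCost μ ν

/-- The semi-dual objective `L(V,T)`. -/
def LObj {E : Type*} [NormedAddCommGroup E] [MeasurableSpace E]
    (μ ν : Measure E) (V : E → ℝ) (T : E → E) : ℝ :=
  ∫ x, (quadCost x (T x) - V (T x)) ∂μ + ∫ y, V y ∂ν

/-- The (topological) support of a measure. -/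
def measSupport {E : Type*} [TopologicalSpace E] [MeasurableSpace E] (ν : Measure E) : Set E :=
  {y | ∀ U : Set E, IsOpen U → y ∈ U → ν U ≠ 0}

/-- A centered Gaussian measure with covariance operator `Q`. -/
def IsCenteredGaussianCov {E : Type*} [NormedAddCommGroup E] [InnerProductSpace ℝ E]
    [MeasurableSpace E] (γ : Measure E) (Q : E →L[ℝ] E) : Prop :=
  IsProbabilityMeasure γ ∧
    ∀ h : E, γ.map (fun x => ⟪x, h⟫) = gaussianReal 0 (Real.toNNReal ⟪Q h, h⟫)

/-- A covariance operator: bounded linear, self-adjoint, positive and trace-class. -/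
def IsCovarianceOp {E : Type*} [NormedAddCommGroup E] [InnerProductSpace ℝ E]
    (Q : E →L[ℝ] E) : Prop :=
  (∀ x y : E, ⟪Q x, y⟫ = ⟪x, Q y⟫) ∧ (∀ x : E, 0 ≤ ⟪Q x, x⟫) ∧
    ∃ C : ℝ, ∀ s : Finset E, Orthonormal ℝ (fun x : s => (x : E)) →
      ∑ x ∈ s, ⟪Q x, x⟫ ≤ C

/-- Convolution of two measures on an additive group: the law of the sum of independent
random vectors with the given laws. -/
def mconv {E : Type*} [Add E] [MeasurableSpace E] (μ ν : Measure E) : Measure E :=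
  (μ.prod ν).map (fun p => p.1 + p.2)

/-- Squared Wasserstein-2 distance (as infimum of coupling costs). -/
def W2sq {E : Type*} [NormedAddCommGroup E] [MeasurableSpace E] (μ ν : Measure E) : ℝ :=
  sInf {r : ℝ | ∃ π : Measure (E × E), IsCoupling μ ν π ∧ r = ∫ p, ‖p.1 - p.2‖ ^ 2 ∂π}

/-!
The plans `(Id × T_k)_# μ_k` have convergent marginals, so they form a tight family and a
subsequence converges weakly to a coupling `π` of the limits. The `L²` norm of the displacement is
lower semicontinuous under weak convergence, and `k ↦ W₂(μ_k, ν)` converges by the triangle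
inequality for `W₂`; hence `π` is optimal as soon as each plan `(Id × T_k)_# μ_k` is optimal among
all couplings, and not only among those induced by maps.

That is so because regular measures have no atoms (unless `H = 0`): any coupling `γ` of
an atomless `μ` with `ν` is approximated in cost by maps. Cut the space into countably many cells of
diameter at most `2δ` and transport the part of `μ` in each cell onto the second marginal of the
part of `γ` above that cell; such a map exists since `μ` has no atoms, and the `L²` norm of the
displacement grows by at most `2δ`.
-/

section Coupling

variable {X : Type*} [MeasurableSpace X] {μ ν : Measure X} {π : Measure (X × X)}

namespace IsCoupling

theorem measurePreserving_fst (h : IsCoupling μ ν π) : MeasurePreserving Prod.fst π μ :=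
  ⟨measurable_fst, h.1⟩

theorem measurePreserving_snd (h : IsCoupling μ ν π) : MeasurePreserving Prod.snd π ν :=
  ⟨measurable_snd, h.2⟩

theorem swap (h : IsCoupling μ ν π) : IsCoupling ν μ (π.map Prod.swap) :=
  ⟨Measure.fst_map_swap.trans h.2, Measure.snd_map_swap.trans h.1⟩

theorem isFiniteMeasure_left [IsFiniteMeasure μ] (h : IsCoupling μ ν π) : IsFiniteMeasure π :=
  have : IsFiniteMeasure (π.map Prod.fst) := h.1 ▸ inferInstance
  Measure.isFiniteMeasure_of_map measurable_fst.aemeasurable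

theorem isFiniteMeasure_right [IsFiniteMeasure ν] (h : IsCoupling μ ν π) : IsFiniteMeasure π :=
  have : IsFiniteMeasure (π.map Prod.snd) := h.2 ▸ inferInstance
  Measure.isFiniteMeasure_of_map measurable_snd.aemeasurable

theorem isProbabilityMeasure [IsProbabilityMeasure μ] (h : IsCoupling μ ν π) :
    IsProbabilityMeasure π :=
  have : IsProbabilityMeasure (π.map Prod.fst) := h.1 ▸ inferInstance
  Measure.isProbabilityMeasure_of_map Prod.fst

end IsCoupling

theorem isCoupling_map_prodMk {S : X → X} (hS : Measurable S) :
    IsCoupling μ (μ.map S) (μ.map fun x ↦ (x, S x)) :=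
  ⟨(Measure.fst_map_prodMk hS).trans Measure.map_id, Measure.snd_map_prodMk measurable_id⟩

theorem isCoupling_prod [IsProbabilityMeasure μ] [IsProbabilityMeasure ν] :
    IsCoupling μ ν (μ.prod ν) :=
  ⟨Measure.fst_prod, Measure.snd_prod⟩

end Coupling

section Gluing

variable {X Y Z : Type*} [MeasurableSpace X] [MeasurableSpace Y] [MeasurableSpace Z]

theorem exists_gluing [StandardBorelSpace Z] [Nonempty Z] {σ : Measure (X × Y)} [SFinite σ]
    {π : Measure (Y × Z)} [IsFiniteMeasure π] (h : σ.snd = π.fst) :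
    ∃ θ : Measure ((X × Y) × Z), MeasurePreserving Prod.fst θ σ ∧
      MeasurePreserving (fun w ↦ (w.1.2, w.2)) θ π := by
  let κ : Kernel (X × Y) Z := π.condKernel.comap Prod.snd measurable_snd
  have hproj : Measurable fun w : (X × Y) × Z ↦ (w.1.2, w.2) := by fun_prop
  refine ⟨σ ⊗ₘ κ, ⟨measurable_fst, Measure.fst_compProd σ κ⟩, hproj, ?_⟩
  conv_rhs => rw [← π.disintegrate π.condKernel, ← h]
  ext s hs
  rw [Measure.map_apply hproj hs, Measure.compProd_apply (hproj hs), Measure.compProd_apply hs,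
    Measure.snd, lintegral_map (Kernel.measurable_kernel_prodMk_left hs) measurable_snd]
  rfl

end Gluing

section DisplacementNorm

variable {X : Type*} [PseudoMetricSpace X] [MeasurableSpace X]

/-- The `L^p` norm of the displacement `dist x y` under a plan `π`. Its `p`-th power is the
transport cost of `π` for the cost `dist x y ^ p`. -/
def displacementNorm (p : ℝ≥0∞) (π : Measure (X × X)) : ℝ≥0∞ :=
  eLpNorm (fun z : X × X ↦ dist z.1 z.2) p π

/-- The Wasserstein distance of order `p`, with values in `ℝ≥0∞`. -/
def wassersteinEDist (p : ℝ≥0∞) (μ ν : Measure X) : ℝ≥0∞ :=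
  ⨅ (π : Measure (X × X)) (_ : IsCoupling μ ν π), displacementNorm p π

/-- An optimal transport plan for the cost `dist x y ^ p`: a coupling of least displacement
norm. -/
def IsOptimalPlan (p : ℝ≥0∞) (μ ν : Measure X) (π : Measure (X × X)) : Prop :=
  IsCoupling μ ν π ∧ ∀ π', IsCoupling μ ν π' → displacementNorm p π ≤ displacementNorm p π'

variable {p : ℝ≥0∞} {μ ν ρ : Measure X} {π : Measure (X × X)}

theorem wassersteinEDist_le_displacementNorm (h : IsCoupling μ ν π) :
    wassersteinEDist p μ ν ≤ displacementNorm p π :=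
  iInf₂_le π h

theorem IsOptimalPlan.displacementNorm_le (h : IsOptimalPlan p μ ν π) :
    displacementNorm p π ≤ wassersteinEDist p μ ν :=
  le_iInf₂ h.2

variable [SecondCountableTopology X] [OpensMeasurableSpace X]

theorem aestronglyMeasurable_dist_prod :
    AEStronglyMeasurable (fun z : X × X ↦ dist z.1 z.2) π :=
  continuous_dist.aestronglyMeasurable

theorem displacementNorm_eq_of_measurePreserving {Ω : Type*} [MeasurableSpace Ω]
    {m : Measure Ω} {f : Ω → X × X} (hf : MeasurePreserving f m π) :
    displacementNorm p π = eLpNorm (fun ω ↦ dist (f ω).1 (f ω).2) p m :=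
  (eLpNorm_comp_measurePreserving aestronglyMeasurable_dist_prod hf).symm

theorem displacementNorm_map_swap :
    displacementNorm p (π.map Prod.swap) = displacementNorm p π := by
  rw [displacementNorm_eq_of_measurePreserving (measurable_swap.measurePreserving π)]
  simp only [displacementNorm, Prod.fst_swap, Prod.snd_swap, dist_comm]

theorem wassersteinEDist_comm : wassersteinEDist p μ ν = wassersteinEDist p ν μ := by
  suffices h : ∀ μ ν : Measure X, wassersteinEDist p μ ν ≤ wassersteinEDist p ν μ from
    (h μ ν).antisymm (h ν μ)
  exact fun μ ν ↦ le_iInf₂ fun π hπ ↦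
    (wassersteinEDist_le_displacementNorm hπ.swap).trans displacementNorm_map_swap.le

theorem eLpNorm_dist_le_add {Ω : Type*} [MeasurableSpace Ω] {m : Measure Ω} {f g h : Ω → X}
    (hf : Measurable f) (hg : Measurable g) (hh : Measurable h) (hp : 1 ≤ p) :
    eLpNorm (fun ω ↦ dist (f ω) (h ω)) p m ≤
      eLpNorm (fun ω ↦ dist (f ω) (g ω)) p m + eLpNorm (fun ω ↦ dist (g ω) (h ω)) p m := by
  calc eLpNorm (fun ω ↦ dist (f ω) (h ω)) p m
      ≤ eLpNorm (fun ω ↦ dist (f ω) (g ω) + dist (g ω) (h ω)) p m :=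
        eLpNorm_mono_real fun ω ↦ by
          simpa only [Real.norm_of_nonneg dist_nonneg] using dist_triangle _ _ _
    _ ≤ _ := eLpNorm_add_le (hf.dist hg).aestronglyMeasurable
        (hg.dist hh).aestronglyMeasurable hp

variable [StandardBorelSpace X] [IsFiniteMeasure ν]

theorem IsCoupling.exists_displacementNorm_le_add {σ π : Measure (X × X)}
    (hσ : IsCoupling μ ν σ) (hπ : IsCoupling ν ρ π) (hp : 1 ≤ p) :
    ∃ γ, IsCoupling μ ρ γ ∧
      displacementNorm p γ ≤ displacementNorm p σ + displacementNorm p π := by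
  have := hσ.isFiniteMeasure_right
  have := hπ.isFiniteMeasure_left
  cases isEmpty_or_nonempty X with
  | inl _ =>
    exact ⟨σ, ⟨Subsingleton.elim _ _, Subsingleton.elim _ _⟩, le_self_add⟩
  | inr _ =>
    obtain ⟨θ, hθσ, hθπ⟩ := exists_gluing (hσ.2.trans hπ.1.symm)
    have hθ : Measurable fun w : (X × X) × X ↦ (w.1.1, w.2) := by fun_prop
    have hθγ := hθ.measurePreserving θ
    refine ⟨θ.map fun w ↦ (w.1.1, w.2), ⟨?_, ?_⟩, ?_⟩
    · rw [Measure.map_map measurable_fst hθ]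
      exact (hσ.measurePreserving_fst.comp hθσ).map_eq
    · rw [Measure.map_map measurable_snd hθ]
      exact (hπ.measurePreserving_snd.comp hθπ).map_eq
    · rw [displacementNorm_eq_of_measurePreserving hθσ,
        displacementNorm_eq_of_measurePreserving hθπ,
        displacementNorm_eq_of_measurePreserving hθγ]
      exact eLpNorm_dist_le_add (by fun_prop) (by fun_prop) (by fun_prop) hp

theorem wassersteinEDist_triangle (hp : 1 ≤ p) :
    wassersteinEDist p μ ρ ≤ wassersteinEDist p μ ν + wassersteinEDist p ν ρ := by
  simp only [wassersteinEDist, ENNReal.iInf_add, ENNReal.add_iInf, le_iInf_iff]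
  intro π hπ σ hσ
  obtain ⟨γ, hγ, hle⟩ := hσ.exists_displacementNorm_le_add hπ hp
  exact (wassersteinEDist_le_displacementNorm hγ).trans hle

end DisplacementNorm

section WeakConvergence

theorem eLpNorm_le_liminf_eLpNorm {X F : Type*} [TopologicalSpace X] [HasOuterApproxClosed X]
    [MeasurableSpace X] [OpensMeasurableSpace X] [SeminormedAddCommGroup F] {p : ℝ≥0∞}
    (hp : p ≠ ∞) {μ : ℕ → ProbabilityMeasure X} {μlim : ProbabilityMeasure X}
    (hμ : Tendsto μ atTop (𝓝 μlim)) {f : X → F} (hf : Continuous f) :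
    eLpNorm f p (μlim : Measure X) ≤ liminf (fun k ↦ eLpNorm f p (μ k : Measure X)) atTop := by
  rcases eq_or_ne p 0 with rfl | hp0
  · simp
  have hcont : Continuous fun x ↦ ‖f x‖ ^ p.toReal :=
    hf.norm.rpow_const fun _ ↦ .inr ENNReal.toReal_nonneg
  have hcost : ∫⁻ x, ‖f x‖ₑ ^ p.toReal ∂μlim
      ≤ liminf (fun k ↦ ∫⁻ x, ‖f x‖ₑ ^ p.toReal ∂(μ k)) atTop := by
    simpa only [← ENNReal.ofReal_rpow_of_nonneg (norm_nonneg _) ENNReal.toReal_nonneg, ofReal_norm]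
      using lintegral_le_liminf_lintegral_of_forall_isOpen_measure_le_liminf_measure
        hcont (fun _ ↦ by positivity)
        fun G hG ↦ ProbabilityMeasure.le_liminf_measure_open_of_tendsto hμ hG
  have hmono : Monotone fun t : ℝ≥0∞ ↦ t ^ (1 / p.toReal) :=
    ENNReal.monotone_rpow_of_nonneg (by positivity)
  simp only [eLpNorm_eq_lintegral_rpow_enorm_toReal hp0 hp]
  exact (hmono hcost).trans_eq
    (hmono.map_liminf_of_continuousAt _ ENNReal.continuous_rpow_const.continuousAt)

theorem integrable_of_forall_dist_le {Ω F : Type*} [NormedAddCommGroup F] [MeasurableSpace Ω]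
    {m : Measure Ω} [IsFiniteMeasure m] {g : Ω → F} (hg : AEStronglyMeasurable g m) {C : ℝ}
    (hC : ∀ x y, dist (g x) (g y) ≤ C) : Integrable g m := by
  rcases isEmpty_or_nonempty Ω with _ | ⟨⟨o⟩⟩
  · exact .of_isEmpty
  · refine .of_bound hg (‖g o‖ + C) (ae_of_all _ fun x ↦ ?_)
    grw [norm_le_norm_add_norm_sub' (g x) (g o), ← dist_eq_norm, hC]

variable {X : Type*} [PseudoMetricSpace X] [SecondCountableTopology X] [MeasurableSpace X]
  [OpensMeasurableSpace X] {p : ℝ≥0∞}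

theorem displacementNorm_le_liminf (hp : p ≠ ∞) {π : ℕ → ProbabilityMeasure (X × X)}
    {πlim : ProbabilityMeasure (X × X)} (hπ : Tendsto π atTop (𝓝 πlim)) :
    displacementNorm p (πlim : Measure (X × X)) ≤
      liminf (fun k ↦ displacementNorm p (π k : Measure (X × X))) atTop :=
  eLpNorm_le_liminf_eLpNorm hp hπ continuous_dist

variable {F : Type*} [NormedAddCommGroup F] [NormedSpace ℝ F] {μ ν : Measure X}
  {K : ℝ≥0} {f : X → F}

theorem IsCoupling.enorm_integral_sub_integral_le [IsProbabilityMeasure μ]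
    {π : Measure (X × X)} (hπ : IsCoupling μ ν π) (hf : LipschitzWith K f)
    (hμ : Integrable f μ) (hν : Integrable f ν) (hp : 1 ≤ p) :
    ‖∫ x, f x ∂μ - ∫ x, f x ∂ν‖ₑ ≤ K * displacementNorm p π := by
  have := hπ.isProbabilityMeasure
  have hfst := hπ.measurePreserving_fst
  have hsnd := hπ.measurePreserving_snd
  have hfst_int : ∫ x, f x ∂μ = ∫ z, f z.1 ∂π := by
    rw [← hfst.map_eq, integral_map hfst.aemeasurable (hfst.map_eq ▸ hμ.1)]
  have hsnd_int : ∫ x, f x ∂ν = ∫ z, f z.2 ∂π := by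
    rw [← hsnd.map_eq, integral_map hsnd.aemeasurable (hsnd.map_eq ▸ hν.1)]
  calc ‖∫ x, f x ∂μ - ∫ x, f x ∂ν‖ₑ
      = ‖∫ z, (f z.1 - f z.2) ∂π‖ₑ := by
        rw [hfst_int, hsnd_int]
        exact congrArg enorm (integral_sub (hfst.integrable_comp_of_integrable hμ)
          (hsnd.integrable_comp_of_integrable hν)).symm
    _ ≤ ∫⁻ z, K * ‖dist z.1 z.2‖ₑ ∂π := by
        refine (enorm_integral_le_lintegral_enorm _).trans (lintegral_mono fun z ↦ ?_)
        rw [← edist_eq_enorm_sub, Real.enorm_of_nonneg dist_nonneg, ← edist_dist]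
        exact hf z.1 z.2
    _ = K * displacementNorm 1 π := by
        rw [lintegral_const_mul' _ _ ENNReal.coe_ne_top, displacementNorm,
          eLpNorm_one_eq_lintegral_enorm]
    _ ≤ K * displacementNorm p π := by
        gcongr
        exact eLpNorm_le_eLpNorm_of_exponent_le hp aestronglyMeasurable_dist_prod

theorem enorm_integral_sub_integral_le_mul_wassersteinEDist [IsProbabilityMeasure μ]
    [IsProbabilityMeasure ν] (hf : LipschitzWith K f) (hμ : Integrable f μ)
    (hν : Integrable f ν) (hp : 1 ≤ p) :
    ‖∫ x, f x ∂μ - ∫ x, f x ∂ν‖ₑ ≤ K * wassersteinEDist p μ ν := by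
  rcases eq_or_ne K 0 with rfl | hK
  · simpa only [ENNReal.coe_zero, zero_mul] using
      isCoupling_prod.enorm_integral_sub_integral_le hf hμ hν hp
  · simp only [wassersteinEDist, ENNReal.mul_iInf_of_ne (ENNReal.coe_ne_zero.2 hK)
      ENNReal.coe_ne_top]
    exact le_iInf₂ fun π hπ ↦ hπ.enorm_integral_sub_integral_le hf hμ hν hp

theorem tendsto_of_tendsto_wassersteinEDist {ι : Type*} {l : Filter ι} [l.IsCountablyGenerated]
    (hp : 1 ≤ p) {μ : ι → ProbabilityMeasure X} {μlim : ProbabilityMeasure X}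
    (hμ : Tendsto (fun k ↦ wassersteinEDist p (μ k : Measure X) μlim) l (𝓝 0)) :
    Tendsto μ l (𝓝 μlim) := by
  refine tendsto_iff_forall_lipschitz_integral_tendsto.2 fun f ⟨C, hC⟩ ⟨L, hL⟩ ↦ ?_
  have hint : ∀ m : ProbabilityMeasure X, Integrable f (m : Measure X) := fun m ↦
    integrable_of_forall_dist_le hL.continuous.aestronglyMeasurable hC
  have hbound : Tendsto (fun k ↦ L * wassersteinEDist p (μ k : Measure X) μlim) l (𝓝 0) := by
    simpa only [mul_zero] using ENNReal.Tendsto.const_mul hμ (.inr ENNReal.coe_ne_top)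
  refine tendsto_iff_edist_tendsto_0.2 (tendsto_of_tendsto_of_tendsto_of_le_of_le
    tendsto_const_nhds hbound (fun _ ↦ zero_le) fun k ↦ ?_)
  rw [edist_eq_enorm_sub]
  exact enorm_integral_sub_integral_le_mul_wassersteinEDist hL (hint _) (hint _) hp

end WeakConvergence

section Compactness

variable {X : Type*} [MeasurableSpace X]

theorem isTightMeasureSet_range_of_tendsto [PseudoMetricSpace X] [CompleteSpace X]
    [SecondCountableTopology X] [OpensMeasurableSpace X] {μ : ℕ → ProbabilityMeasure X}
    {μlim : ProbabilityMeasure X} (hμ : Tendsto μ atTop (𝓝 μlim)) :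
    IsTightMeasureSet (Set.range fun k ↦ (μ k : Measure X)) := by
  have hcompact : IsCompact (closure (Set.range μ)) :=
    hμ.isCompact_insert_range.closure_of_subset (Set.subset_insert _ _)
  refine (isTightMeasureSet_of_isCompact_closure hcompact).subset ?_
  rintro _ ⟨k, rfl⟩
  exact ⟨μ k, ⟨k, rfl⟩, rfl⟩

theorem isCoupling_of_tendsto [MetricSpace X] [SecondCountableTopology X] [BorelSpace X] {ι : Type*}
    {l : Filter ι} [l.NeBot] {μ ν : ι → ProbabilityMeasure X} {μlim νlim : ProbabilityMeasure X}
    {π : ι → ProbabilityMeasure (X × X)} {πlim : ProbabilityMeasure (X × X)}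
    (hμ : Tendsto μ l (𝓝 μlim)) (hν : Tendsto ν l (𝓝 νlim)) (hπ : Tendsto π l (𝓝 πlim))
    (hcoup : ∀ k, IsCoupling (μ k : Measure X) (ν k) (π k : Measure (X × X))) :
    IsCoupling (μlim : Measure X) νlim (πlim : Measure (X × X)) := by
  have hfst := ProbabilityMeasure.tendsto_map_of_tendsto_of_continuous π πlim hπ continuous_fst
  have hsnd := ProbabilityMeasure.tendsto_map_of_tendsto_of_continuous π πlim hπ continuous_snd
  have hfst_eq := tendsto_nhds_unique hfst (hμ.congr fun k ↦ Subtype.ext (hcoup k).1.symm)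
  have hsnd_eq := tendsto_nhds_unique hsnd (hν.congr fun k ↦ Subtype.ext (hcoup k).2.symm)
  exact ⟨congrArg Subtype.val hfst_eq, congrArg Subtype.val hsnd_eq⟩

theorem exists_subseq_tendsto_of_isCoupling [MetricSpace X] [CompleteSpace X]
    [SecondCountableTopology X] [BorelSpace X] {μ ν : ℕ → ProbabilityMeasure X}
    {μlim νlim : ProbabilityMeasure X} (hμ : Tendsto μ atTop (𝓝 μlim))
    (hν : Tendsto ν atTop (𝓝 νlim)) {π : ℕ → ProbabilityMeasure (X × X)}
    (hcoup : ∀ k, IsCoupling (μ k : Measure X) (ν k) (π k : Measure (X × X))) :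
    ∃ φ : ℕ → ℕ, StrictMono φ ∧ ∃ πlim : ProbabilityMeasure (X × X),
      Tendsto (π ∘ φ) atTop (𝓝 πlim) := by
  have htight : IsTightMeasureSet {m | ∃ π' ∈ Set.range π, (π' : Measure (X × X)) = m} := by
    refine ((isTightMeasureSet_range_of_tendsto hμ).subset ?_).prodMk
      ((isTightMeasureSet_range_of_tendsto hν).subset ?_)
    · rintro _ ⟨_, ⟨_, ⟨k, rfl⟩, rfl⟩, rfl⟩
      exact ⟨k, (hcoup k).1.symm⟩
    · rintro _ ⟨_, ⟨_, ⟨k, rfl⟩, rfl⟩, rfl⟩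
      exact ⟨k, (hcoup k).2.symm⟩
  obtain ⟨πlim, -, φ, hφ, hπ⟩ := (isCompact_closure_of_isTightMeasureSet htight).isSeqCompact
    fun k ↦ subset_closure (Set.mem_range_self k)
  exact ⟨φ, hφ, πlim, hπ⟩

end Compactness

section Stability

variable {X : Type*} [MetricSpace X] [CompleteSpace X] [SecondCountableTopology X]
  [MeasurableSpace X] [BorelSpace X] {p : ℝ≥0∞}

theorem isOptimalPlan_of_tendsto (hp : 1 ≤ p) (hp' : p ≠ ∞)
    {μ ν : ℕ → ProbabilityMeasure X} {μlim νlim : ProbabilityMeasure X}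
    (hμ : Tendsto (fun k ↦ wassersteinEDist p (μ k : Measure X) μlim) atTop (𝓝 0))
    (hν : Tendsto (fun k ↦ wassersteinEDist p (ν k : Measure X) νlim) atTop (𝓝 0))
    {π : ℕ → ProbabilityMeasure (X × X)} {πlim : ProbabilityMeasure (X × X)}
    (hopt : ∀ k, IsOptimalPlan p (μ k : Measure X) (ν k) (π k : Measure (X × X)))
    (hπ : Tendsto π atTop (𝓝 πlim)) :
    IsOptimalPlan p (μlim : Measure X) νlim (πlim : Measure (X × X)) := by
  refine ⟨isCoupling_of_tendsto (tendsto_of_tendsto_wassersteinEDist hp hμ)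
    (tendsto_of_tendsto_wassersteinEDist hp hν) hπ fun k ↦ (hopt k).1, fun π' hπ' ↦ ?_⟩
  let D := displacementNorm p π'
  let B : ℕ → ℝ≥0∞ := fun k ↦ wassersteinEDist p (μ k : Measure X) μlim +
    (D + wassersteinEDist p (ν k : Measure X) νlim)
  have hbound : ∀ k, displacementNorm p (π k : Measure (X × X)) ≤ B k := fun k ↦ by
    calc displacementNorm p (π k : Measure (X × X))
        ≤ wassersteinEDist p (μ k : Measure X) (ν k) := (hopt k).displacementNorm_le
      _ ≤ wassersteinEDist p (μ k : Measure X) μlim + (wassersteinEDist p (μlim : Measure X) νlim +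
          wassersteinEDist p (νlim : Measure X) (ν k)) := by
        grw [wassersteinEDist_triangle (ν := (μlim : Measure X)) hp,
          wassersteinEDist_triangle (μ := (μlim : Measure X)) (ν := (νlim : Measure X)) hp]
      _ ≤ B k := by
        rw [wassersteinEDist_comm (μ := (νlim : Measure X))]
        grw [wassersteinEDist_le_displacementNorm hπ']
  have hB : Tendsto B atTop (𝓝 D) := by
    simpa only [zero_add, add_zero] using hμ.add (tendsto_const_nhds.add hν)
  calc displacementNorm p (πlim : Measure (X × X))
      ≤ liminf (fun k ↦ displacementNorm p (π k : Measure (X × X))) atTop :=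
        displacementNorm_le_liminf hp' hπ
    _ ≤ liminf B atTop := liminf_le_liminf (.of_forall hbound)
    _ = D := hB.liminf_eq

theorem exists_subseq_tendsto_isOptimalPlan (hp : 1 ≤ p) (hp' : p ≠ ∞)
    {μ ν : ℕ → ProbabilityMeasure X} {μlim νlim : ProbabilityMeasure X}
    (hμ : Tendsto (fun k ↦ wassersteinEDist p (μ k : Measure X) μlim) atTop (𝓝 0))
    (hν : Tendsto (fun k ↦ wassersteinEDist p (ν k : Measure X) νlim) atTop (𝓝 0))
    {π : ℕ → ProbabilityMeasure (X × X)}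
    (hopt : ∀ k, IsOptimalPlan p (μ k : Measure X) (ν k) (π k : Measure (X × X))) :
    ∃ φ : ℕ → ℕ, StrictMono φ ∧ ∃ πlim : ProbabilityMeasure (X × X),
      Tendsto (π ∘ φ) atTop (𝓝 πlim) ∧
        IsOptimalPlan p (μlim : Measure X) νlim (πlim : Measure (X × X)) := by
  obtain ⟨φ, hφ, πlim, hπ⟩ := exists_subseq_tendsto_of_isCoupling
    (tendsto_of_tendsto_wassersteinEDist hp hμ) (tendsto_of_tendsto_wassersteinEDist hp hν)
    fun k ↦ (hopt k).1
  exact ⟨φ, hφ, πlim, hπ, isOptimalPlan_of_tendsto hp hp' (hμ.comp hφ.tendsto_atTop)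
    (hν.comp hφ.tendsto_atTop) (fun k ↦ hopt (φ k)) hπ⟩

end Stability

section Atomless

theorem nullSingletonClass_map_of_injective {X Y : Type*} [MeasurableSpace X] [MeasurableSpace Y]
    [MeasurableSingletonClass Y] {μ : Measure X} [NullSingletonClass μ] {f : X → Y}
    (hf : Measurable f) (hinj : Function.Injective f) : NullSingletonClass (μ.map f) where
  measure_singleton y := by
    rw [Measure.map_apply hf (measurableSet_singleton y)]
    exact (Set.subsingleton_singleton.preimage hinj).measure_zero μ

theorem continuous_cdf (m : Measure ℝ) [IsProbabilityMeasure m] [NullSingletonClass m] :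
    Continuous (cdf m) := by
  refine continuous_iff_continuousAt.2 fun t ↦ ?_
  rw [(monotone_cdf m).continuousAt_iff_leftLim_eq_rightLim, StieltjesFunction.rightLim_eq]
  have hjump : ENNReal.ofReal (cdf m t - Function.leftLim (cdf m) t) = 0 := by
    rw [← StieltjesFunction.measure_singleton, measure_cdf, measure_singleton]
  exact ((monotone_cdf m).leftLim_le le_rfl).antisymm
    (sub_nonpos.1 (ENNReal.ofReal_eq_zero.1 hjump))

theorem measure_setOf_cdf_le (m : Measure ℝ) [IsProbabilityMeasure m] [NullSingletonClass m]
    {t : ℝ} (h0 : 0 ≤ t) (h1 : t ≤ 1) : m {x | cdf m x ≤ t} = ENNReal.ofReal t := by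
  have hcont := continuous_cdf m
  rcases h1.eq_or_lt with rfl | h1
  · simp [cdf_le_one]
  obtain ⟨b, hb⟩ := ((tendsto_cdf_atTop m).eventually (lt_mem_nhds h1)).exists
  have hbdd : BddAbove {x | cdf m x ≤ t} :=
    ⟨b, fun x hx ↦ le_of_not_ge fun hbx ↦ (hb.trans_le (monotone_cdf m hbx)).not_ge hx⟩
  rcases {x | cdf m x ≤ t}.eq_empty_or_nonempty with hempty | hne
  · have ht : t ≤ 0 := ge_of_tendsto' (tendsto_cdf_atBot m) fun x ↦
      (not_le.1 (Set.eq_empty_iff_forall_notMem.1 hempty x)).le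
    rw [hempty, measure_empty, ENNReal.ofReal_of_nonpos ht]
  set s := sSup {x | cdf m x ≤ t}
  have hs : cdf m s ≤ t := (isClosed_le hcont continuous_const).csSup_mem hne hbdd
  have hIic : {x | cdf m x ≤ t} = Set.Iic s :=
    Set.Subset.antisymm (fun x hx ↦ le_csSup hbdd hx) fun x hx ↦ (monotone_cdf m hx).trans hs
  obtain ⟨u, hu⟩ := mem_range_of_exists_le_of_exists_ge hcont ⟨s, hs⟩ ⟨b, hb.le⟩
  have hst : cdf m s = t := hs.antisymm (hu ▸ monotone_cdf m (le_csSup hbdd hu.le))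
  rw [hIic, ← ofReal_cdf, hst]

theorem map_cdf_eq_volume (m : Measure ℝ) [IsProbabilityMeasure m] [NullSingletonClass m] :
    m.map (fun x ↦ (⟨cdf m x, cdf_nonneg m x, cdf_le_one m x⟩ : unitInterval)) = volume := by
  have hmeas : Measurable fun x ↦ (⟨cdf m x, cdf_nonneg m x, cdf_le_one m x⟩ : unitInterval) :=
    (monotone_cdf m).measurable.subtype_mk
  have := Measure.isProbabilityMeasure_map (μ := m) hmeas.aemeasurable
  refine Measure.ext_of_Iic _ _ fun t ↦ ?_
  rw [Measure.map_apply hmeas measurableSet_Iic, unitInterval.volume_Iic,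
    ← measure_setOf_cdf_le m t.2.1 t.2.2]
  rfl

variable {X Y : Type*} [MeasurableSpace X] [StandardBorelSpace X] [MeasurableSpace Y]
  [StandardBorelSpace Y] [Nonempty Y]

theorem exists_measurable_map_eq_of_isProbabilityMeasure (μ : Measure X) [IsProbabilityMeasure μ]
    [NullSingletonClass μ] (ρ : Measure Y) [IsProbabilityMeasure ρ] :
    ∃ T : X → Y, Measurable T ∧ μ.map T = ρ := by
  have he := measurableEmbedding_embeddingReal X
  set m := μ.map (embeddingReal X)
  have := Measure.isProbabilityMeasure_map (μ := μ) he.measurable.aemeasurable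
  have := nullSingletonClass_map_of_injective (μ := μ) he.measurable he.injective
  obtain ⟨f, hf, hfρ⟩ := ρ.exists_measurable_map_eq
  have hU : Measurable fun x ↦ (⟨cdf m x, cdf_nonneg m x, cdf_le_one m x⟩ : unitInterval) :=
    (monotone_cdf m).measurable.subtype_mk
  refine ⟨_, hf.comp (hU.comp he.measurable), ?_⟩
  rw [← Measure.map_map hf (hU.comp he.measurable), ← Measure.map_map hU he.measurable,
    map_cdf_eq_volume, hfρ]

theorem exists_measurable_map_eq (μ : Measure X) [IsFiniteMeasure μ] [NullSingletonClass μ]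
    (ρ : Measure Y) (h : μ Set.univ = ρ Set.univ) : ∃ T : X → Y, Measurable T ∧ μ.map T = ρ := by
  rcases eq_zero_or_neZero μ with rfl | hμ
  · obtain rfl : ρ = 0 := Measure.measure_univ_eq_zero.1 (h.symm.trans (by simp))
    exact ⟨fun _ ↦ Classical.arbitrary Y, measurable_const, Measure.map_zero _⟩
  have : IsFiniteMeasure ρ := ⟨h ▸ measure_lt_top μ _⟩
  have : NeZero ρ := ⟨fun h0 ↦ hμ.out (Measure.measure_univ_eq_zero.1 (by simp [h, h0]))⟩
  have hc : μ Set.univ ≠ 0 := Measure.measure_univ_ne_zero.2 hμ.out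
  have : NullSingletonClass ((μ Set.univ)⁻¹ • μ) := ⟨fun x ↦ by simp⟩
  obtain ⟨T, hT, hTρ⟩ := exists_measurable_map_eq_of_isProbabilityMeasure
    ((μ Set.univ)⁻¹ • μ) ((ρ Set.univ)⁻¹ • ρ)
  refine ⟨T, hT, ?_⟩
  rw [Measure.map_smul, ← h] at hTρ
  simpa only [smul_smul, ENNReal.mul_inv_cancel hc (measure_ne_top μ _), one_smul] using
    congrArg (μ Set.univ • ·) hTρ

theorem exists_measurable_map_restrict_fst_eq (γ : Measure (X × Y)) [IsFiniteMeasure γ]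
    [NullSingletonClass γ.fst] {s : Set X} (hs : MeasurableSet s) :
    ∃ T : X → Y, Measurable T ∧
      (γ.fst.restrict s).map T = (γ.restrict (Prod.fst ⁻¹' s)).snd :=
  exists_measurable_map_eq _ _ <| by
    rw [Measure.snd_univ, Measure.restrict_apply_univ, Measure.restrict_apply_univ,
      Measure.fst_apply hs]

theorem exists_measurable_map_prodMk_eq {ι : Type*} [Countable ι] [MeasurableSpace ι]
    [MeasurableSingletonClass ι] (γ : Measure (X × Y)) [IsFiniteMeasure γ]
    [NullSingletonClass γ.fst] {q : X → ι} (hq : Measurable q) :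
    ∃ T : X → Y, Measurable T ∧
      γ.fst.map (fun x ↦ (q x, T x)) = γ.map (fun z ↦ (q z.1, z.2)) := by
  have hcell : ∀ i, MeasurableSet (q ⁻¹' {i}) := fun i ↦ hq (measurableSet_singleton i)
  choose T hT hTγ using fun i ↦ exists_measurable_map_restrict_fst_eq γ (hcell i)
  have hglue : Measurable fun x ↦ T (q x) x :=
    (measurable_from_prod_countable_right (f := fun w : ι × X ↦ T w.1 w.2) hT).comp
      (hq.prodMk measurable_id)
  refine ⟨fun x ↦ T (q x) x, hglue, ?_⟩
  have hcover : ⋃ i, Prod.fst ⁻¹' {i} = (Set.univ : Set (ι × Y)) := by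
    rw [← Set.preimage_iUnion, Set.iUnion_of_singleton, Set.preimage_univ]
  refine (Measure.ext_iff_of_iUnion_eq_univ hcover).2 fun i ↦ ?_
  have hi : MeasurableSet (Prod.fst ⁻¹' {i} : Set (ι × Y)) :=
    measurable_fst (measurableSet_singleton i)
  calc (γ.fst.map fun x ↦ (q x, T (q x) x)).restrict (Prod.fst ⁻¹' {i})
      = (γ.fst.restrict (q ⁻¹' {i})).map fun x ↦ (q x, T (q x) x) :=
        Measure.restrict_map (hq.prodMk hglue) hi
    _ = (γ.fst.restrict (q ⁻¹' {i})).map fun x ↦ (i, T i x) := by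
        refine Measure.map_congr ((ae_restrict_mem (hcell i)).mono fun x hx ↦ ?_)
        exact congrArg (fun j ↦ (j, T j x)) hx
    _ = ((γ.restrict (Prod.fst ⁻¹' (q ⁻¹' {i}))).map Prod.snd).map (Prod.mk i) := by
        rw [← Measure.snd, ← hTγ, Measure.map_map measurable_prodMk_left (hT i)]
        rfl
    _ = (γ.restrict (Prod.fst ⁻¹' (q ⁻¹' {i}))).map fun z ↦ (q z.1, z.2) := by
        rw [Measure.map_map measurable_prodMk_left measurable_snd]
        refine Measure.map_congr ((ae_restrict_mem (measurable_fst (hcell i))).mono fun z hz ↦ ?_)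
        exact congrArg (·, z.2) (Eq.symm hz)
    _ = (γ.map fun z ↦ (q z.1, z.2)).restrict (Prod.fst ⁻¹' {i}) :=
        (Measure.restrict_map (by fun_prop) hi).symm

end Atomless

section GraphPlans

theorem eLpNorm_dist_le_ofReal {Ω X : Type*} [PseudoMetricSpace X] [MeasurableSpace Ω]
    {m : Measure Ω} [IsProbabilityMeasure m] {p : ℝ≥0∞} {f g : Ω → X} {δ : ℝ}
    (h : ∀ ω, dist (f ω) (g ω) ≤ δ) :
    eLpNorm (fun ω ↦ dist (f ω) (g ω)) p m ≤ ENNReal.ofReal δ := by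
  simpa only [measure_univ, ENNReal.one_rpow, one_mul] using eLpNorm_le_of_ae_bound (p := p)
    (ae_of_all m fun ω ↦ (Real.norm_of_nonneg dist_nonneg).trans_le (h ω))

variable {X : Type*} [PseudoMetricSpace X] [SecondCountableTopology X] [MeasurableSpace X]
  [OpensMeasurableSpace X] {p : ℝ≥0∞} {μ ν : Measure X}

theorem exists_measurable_nat_dist_lt [Nonempty X] {δ : ℝ} (hδ : 0 < δ) :
    ∃ (q : X → ℕ) (d : ℕ → X), Measurable q ∧ ∀ x, dist x (d (q x)) < δ := by
  classical
  have hex : ∀ x, ∃ n, dist x (TopologicalSpace.denseSeq X n) < δ := fun x ↦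
    (TopologicalSpace.denseRange_denseSeq X).exists_dist_lt x hδ
  exact ⟨fun x ↦ Nat.find (hex x), TopologicalSpace.denseSeq X,
    measurable_find hex fun n ↦ measurableSet_lt (by fun_prop) measurable_const,
    fun x ↦ Nat.find_spec (hex x)⟩

theorem displacementNorm_le_of_map_discretize_eq {ι : Type*} [MeasurableSpace ι] {q : X → ι}
    {d : ι → X} (hq : Measurable q) (hd : Measurable d) {δ : ℝ}
    (hqd : ∀ x, dist x (d (q x)) ≤ δ) {σ γ : Measure (X × X)} [IsProbabilityMeasure σ]
    [IsProbabilityMeasure γ] (hp : 1 ≤ p)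
    (h : σ.map (fun z ↦ (q z.1, z.2)) = γ.map (fun z ↦ (q z.1, z.2))) :
    displacementNorm p σ ≤ displacementNorm p γ + 2 * ENNReal.ofReal δ := by
  let D : Measure (X × X) → ℝ≥0∞ := fun m ↦ eLpNorm (fun z ↦ dist (d (q z.1)) z.2) p m
  have hD : ∀ m, D m = eLpNorm (fun w : ι × X ↦ dist (d w.1) w.2) p
      (m.map fun z ↦ (q z.1, z.2)) := fun m ↦ by
    have hdist : Measurable fun w : ι × X ↦ dist (d w.1) w.2 := by fun_prop
    rw [eLpNorm_map_measure hdist.aestronglyMeasurable (by fun_prop)]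
    rfl
  calc displacementNorm p σ
      ≤ eLpNorm (fun z ↦ dist z.1 (d (q z.1))) p σ + D σ :=
        eLpNorm_dist_le_add measurable_fst (by fun_prop) measurable_snd hp
    _ = eLpNorm (fun z ↦ dist z.1 (d (q z.1))) p σ + D γ := by rw [hD, hD, h]
    _ ≤ eLpNorm (fun z ↦ dist z.1 (d (q z.1))) p σ +
        (eLpNorm (fun z ↦ dist (d (q z.1)) z.1) p γ + displacementNorm p γ) := by
        gcongr
        exact eLpNorm_dist_le_add (by fun_prop) measurable_fst measurable_snd hp
    _ ≤ ENNReal.ofReal δ + (ENNReal.ofReal δ + displacementNorm p γ) := by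
        gcongr
        · exact eLpNorm_dist_le_ofReal fun z ↦ hqd z.1
        · exact eLpNorm_dist_le_ofReal fun z ↦ (dist_comm _ _).trans_le (hqd z.1)
    _ = displacementNorm p γ + 2 * ENNReal.ofReal δ := by ring

variable [StandardBorelSpace X] [IsProbabilityMeasure μ] [NullSingletonClass μ]

theorem IsCoupling.exists_map_eq_displacementNorm_le {γ : Measure (X × X)}
    (hγ : IsCoupling μ ν γ) (hp : 1 ≤ p) {ε : ℝ≥0∞} (hε : ε ≠ 0) :
    ∃ S : X → X, Measurable S ∧ μ.map S = ν ∧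
      displacementNorm p (μ.map fun x ↦ (x, S x)) ≤ displacementNorm p γ + ε := by
  have := hγ.isProbabilityMeasure
  have := nonempty_of_isProbabilityMeasure μ
  have hfst : γ.fst = μ := hγ.1
  have : NullSingletonClass γ.fst := hfst ▸ ‹_›
  obtain ⟨δ, hδ, hδε⟩ := ENNReal.exists_nnreal_pos_mul_lt ENNReal.ofNat_ne_top hε (a := 2)
  obtain ⟨q, d, hq, hqd⟩ := exists_measurable_nat_dist_lt (X := X) (NNReal.coe_pos.2 hδ)
  obtain ⟨S, hS, hSγ⟩ := exists_measurable_map_prodMk_eq γ hq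
  have hquant : Measurable fun z : X × X ↦ (q z.1, z.2) := by fun_prop
  have := (isCoupling_map_prodMk (μ := μ) hS).isProbabilityMeasure
  refine ⟨S, hS, ?_, ?_⟩
  · rw [← hγ.2, ← hfst, ← Measure.snd_map_prodMk hq, hSγ]
    exact Measure.map_map measurable_snd hquant
  · refine (displacementNorm_le_of_map_discretize_eq hq measurable_from_nat
      (fun x ↦ (hqd x).le) hp (γ := γ) ?_).trans ?_
    · rw [← hSγ, hfst, Measure.map_map hquant (measurable_id'.prodMk hS)]
      rfl
    · rw [ENNReal.ofReal_coe_nnreal, mul_comm]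
      gcongr

theorem isOptimalPlan_map_prodMk (hp : 1 ≤ p) {T : X → X} (hT : Measurable T)
    (hopt : ∀ S : X → X, Measurable S → μ.map S = μ.map T →
      displacementNorm p (μ.map fun x ↦ (x, T x)) ≤ displacementNorm p (μ.map fun x ↦ (x, S x))) :
    IsOptimalPlan p μ (μ.map T) (μ.map fun x ↦ (x, T x)) := by
  refine ⟨isCoupling_map_prodMk hT, fun γ hγ ↦ ENNReal.le_of_forall_pos_le_add fun ε hε _ ↦ ?_⟩
  obtain ⟨S, hS, hST, hle⟩ :=
    hγ.exists_map_eq_displacementNorm_le hp (ENNReal.coe_ne_zero.2 hε.ne')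
  exact (hopt S hS hST).trans hle

end GraphPlans

section QuadraticCost

variable {E : Type*} [NormedAddCommGroup E] [SecondCountableTopology E] [MeasurableSpace E]
  [BorelSpace E] {μ ν : Measure E} {π : Measure (E × E)}

theorem integral_norm_sub_sq_eq_displacementNorm :
    ∫ z, ‖z.1 - z.2‖ ^ 2 ∂π = (displacementNorm 2 π ^ 2).toReal := by
  have hsq : displacementNorm 2 π ^ 2 = ∫⁻ z, ENNReal.ofReal (‖z.1 - z.2‖ ^ 2) ∂π := by
    have hpow := eLpNorm_nnreal_pow_eq_lintegral (p := 2) (μ := π)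
      (f := fun z : E × E ↦ dist z.1 z.2) two_ne_zero
    simpa only [ENNReal.coe_ofNat, NNReal.coe_ofNat, ENNReal.rpow_ofNat, ← ofReal_norm,
      norm_norm, displacementNorm, dist_eq_norm, ← ENNReal.ofReal_pow (norm_nonneg _)] using hpow
  rw [hsq, integral_eq_lintegral_of_nonneg_ae (ae_of_all _ fun z ↦ by positivity)
    (Continuous.aestronglyMeasurable (by fun_prop))]

theorem integral_quadCost_eq_displacementNorm :
    ∫ z, quadCost z.1 z.2 ∂π = 1 / 2 * (displacementNorm 2 π ^ 2).toReal := by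
  rw [← integral_norm_sub_sq_eq_displacementNorm, ← integral_const_mul]
  rfl

theorem integral_quadCost_map_prodMk {S : E → E} (hS : Measurable S) :
    ∫ x, quadCost x (S x) ∂μ =
      1 / 2 * (displacementNorm 2 (μ.map fun x ↦ (x, S x)) ^ 2).toReal := by
  have hcont : Continuous fun z : E × E ↦ quadCost z.1 z.2 := by unfold quadCost; fun_prop
  rw [← integral_quadCost_eq_displacementNorm,
    integral_map (measurable_id'.prodMk hS).aemeasurable hcont.aestronglyMeasurable]

theorem HasFiniteSecondMoment.memLp_id (h : HasFiniteSecondMoment μ) : MemLp id 2 μ :=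
  (memLp_two_iff_integrable_sq_norm aestronglyMeasurable_id).2 h

theorem IsCoupling.displacementNorm_ne_top (hπ : IsCoupling μ ν π)
    (hμ : HasFiniteSecondMoment μ) (hν : HasFiniteSecondMoment ν) :
    displacementNorm 2 π ≠ ∞ := by
  have hsub := (hμ.memLp_id.comp_measurePreserving hπ.measurePreserving_fst).sub
    (hν.memLp_id.comp_measurePreserving hπ.measurePreserving_snd)
  simpa only [displacementNorm, dist_eq_norm] using! hsub.norm.eLpNorm_ne_top

theorem IsOptimalPlan.integral_quadCost_le (h : IsOptimalPlan 2 μ ν π)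
    (hμ : HasFiniteSecondMoment μ) (hν : HasFiniteSecondMoment ν) {π' : Measure (E × E)}
    (hπ' : IsCoupling μ ν π') :
    ∫ z, quadCost z.1 z.2 ∂π ≤ ∫ z, quadCost z.1 z.2 ∂π' := by
  have hfin : displacementNorm 2 π' ^ 2 ≠ ∞ :=
    ENNReal.pow_ne_top (hπ'.displacementNorm_ne_top hμ hν)
  simp only [integral_quadCost_eq_displacementNorm]
  gcongr
  exact h.2 π' hπ'

theorem IsMongeMap.isOptimalPlan [CompleteSpace E] [IsProbabilityMeasure μ] {T : E → E}
    (hT : IsMongeMap μ ν T) (hμ : HasFiniteSecondMoment μ) (hν : HasFiniteSecondMoment ν)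
    (hatom : Nontrivial E → NullSingletonClass μ) :
    IsOptimalPlan 2 μ ν (μ.map fun x ↦ (x, T x)) := by
  obtain ⟨hTm, rfl, hle⟩ := hT
  rcases subsingleton_or_nontrivial E with _ | hE
  · have hzero : ∀ z : E × E, dist z.1 z.2 = 0 := fun z ↦ by
      rw [Subsingleton.elim z.1 z.2, dist_self]
    refine ⟨isCoupling_map_prodMk hTm, fun _ _ ↦ ?_⟩
    simp only [displacementNorm, hzero, eLpNorm_zero', le_refl]
  have := hatom hE
  refine isOptimalPlan_map_prodMk one_le_two hTm fun S hS hST ↦ ?_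
  have hfin : ∀ {R : E → E}, Measurable R → μ.map R = μ.map T →
      displacementNorm 2 (μ.map fun x ↦ (x, R x)) ^ 2 ≠ ∞ := fun hR hRT ↦
    ENNReal.pow_ne_top ((isCoupling_map_prodMk hR).displacementNorm_ne_top hμ (hRT ▸ hν))
  have hcost := hle S hS hST
  rw [integral_quadCost_map_prodMk hTm, integral_quadCost_map_prodMk hS,
    mul_le_mul_iff_right₀ one_half_pos, ENNReal.toReal_le_toReal (hfin hTm rfl) (hfin hS hST)]
    at hcost
  exact (ENNReal.pow_le_pow_left_iff two_ne_zero).1 hcost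

theorem W2sq_self : W2sq μ μ = 0 := by
  have hdiag : Measurable fun x : E ↦ (x, x) := by fun_prop
  have hnonneg : ∀ r ∈ {r : ℝ | ∃ π : Measure (E × E), IsCoupling μ μ π ∧
      r = ∫ z, ‖z.1 - z.2‖ ^ 2 ∂π}, 0 ≤ r := by
    rintro _ ⟨π, -, rfl⟩
    positivity
  refine le_antisymm (csInf_le ⟨0, hnonneg⟩ ⟨μ.map fun x ↦ (x, x), ?_, ?_⟩)
    (Real.sInf_nonneg hnonneg)
  · simpa only [Measure.map_id'] using isCoupling_map_prodMk (μ := μ) measurable_id'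
  · rw [integral_map hdiag.aemeasurable (Continuous.aestronglyMeasurable (by fun_prop))]
    simp

variable [IsProbabilityMeasure ν]

theorem wassersteinEDist_ne_top [IsProbabilityMeasure μ] (hμ : HasFiniteSecondMoment μ)
    (hν : HasFiniteSecondMoment ν) : wassersteinEDist 2 μ ν ≠ ∞ :=
  ne_top_of_le_ne_top (isCoupling_prod.displacementNorm_ne_top hμ hν)
    (wassersteinEDist_le_displacementNorm isCoupling_prod)

theorem toReal_wassersteinEDist_sq_le_W2sq [IsProbabilityMeasure μ]
    (hμ : HasFiniteSecondMoment μ) (hν : HasFiniteSecondMoment ν) :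
    (wassersteinEDist 2 μ ν).toReal ^ 2 ≤ W2sq μ ν := by
  refine le_csInf ⟨_, μ.prod ν, isCoupling_prod, rfl⟩ ?_
  rintro _ ⟨π, hπ, rfl⟩
  rw [integral_norm_sub_sq_eq_displacementNorm, ENNReal.toReal_pow]
  gcongr
  · exact hπ.displacementNorm_ne_top hμ hν
  · exact wassersteinEDist_le_displacementNorm hπ

theorem tendsto_wassersteinEDist_of_tendsto_W2sq {ι : Type*} {l : Filter ι} {μ : ι → Measure E}
    (hprob : ∀ k, IsProbabilityMeasure (μ k)) (hμ : ∀ k, HasFiniteSecondMoment (μ k))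
    (hν : HasFiniteSecondMoment ν) (h : Tendsto (fun k ↦ W2sq (μ k) ν) l (𝓝 0)) :
    Tendsto (fun k ↦ wassersteinEDist 2 (μ k) ν) l (𝓝 0) := by
  have hsqrt : Tendsto (fun k ↦ √(W2sq (μ k) ν)) l (𝓝 0) := by
    simpa only [Real.sqrt_zero] using h.sqrt
  refine (ENNReal.tendsto_toReal_iff (fun k ↦ wassersteinEDist_ne_top (hμ k) hν)
    ENNReal.zero_ne_top).1 (squeeze_zero (fun _ ↦ ENNReal.toReal_nonneg) (fun k ↦ ?_) hsqrt)
  exact Real.le_sqrt_of_sq_le (toReal_wassersteinEDist_sq_le_W2sq (hμ k) hν)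

end QuadraticCost

theorem IsRegularMeasure.nullSingletonClass {E : Type*} [NormedAddCommGroup E]
    [InnerProductSpace ℝ E] [MeasurableSpace E] [BorelSpace E] [Nontrivial E] {μ : Measure E}
    (h : IsRegularMeasure μ) : NullSingletonClass μ where
  measure_singleton x := by
    refine h _ ⟨measurableSet_singleton x, fun γ hγ ↦ ?_⟩
    obtain ⟨v, hv⟩ := exists_ne (0 : E)
    obtain ⟨m, s, hs, hγv⟩ := hγ.2 v
    have := nullSingletonClass_gaussianReal (μ := m) (hs hv).ne'
    have hinner : Measurable fun y : E ↦ ⟪y, v⟫ := Continuous.measurable (by fun_prop)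
    have hslice : γ ((fun y ↦ ⟪y, v⟫) ⁻¹' {⟪x, v⟫}) = 0 := by
      rw [← Measure.map_apply hinner (measurableSet_singleton _), hγv, measure_singleton]
    exact measure_mono_null (fun y (hy : y = x) ↦ hy ▸ rfl) hslice

theorem statement3_general
    {E : Type*} [NormedAddCommGroup E] [CompleteSpace E] [SecondCountableTopology E]
    [MeasurableSpace E] [BorelSpace E]
    {μ ν : ℕ → Measure E} (hμprob : ∀ k, IsProbabilityMeasure (μ k))
    (hatom : ∀ k, Nontrivial E → NullSingletonClass (μ k))
    (hμ : ∀ k, HasFiniteSecondMoment (μ k)) (hνprob : ∀ k, IsProbabilityMeasure (ν k))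
    (hν : ∀ k, HasFiniteSecondMoment (ν k))
    {T : ℕ → E → E} (hT : ∀ k, IsMongeMap (μ k) (ν k) (T k))
    {μlim νlim : Measure E} [IsProbabilityMeasure μlim] [IsProbabilityMeasure νlim]
    (hμlim : HasFiniteSecondMoment μlim) (hνlim : HasFiniteSecondMoment νlim)
    (hWμ : Tendsto (fun k ↦ W2sq (μ k) μlim) atTop (𝓝 0))
    (hWν : Tendsto (fun k ↦ W2sq (ν k) νlim) atTop (𝓝 0)) :
    ∃ φ : ℕ → ℕ, StrictMono φ ∧
      ∃ π : Measure (E × E), IsCoupling μlim νlim π ∧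
        (∀ π' : Measure (E × E), IsCoupling μlim νlim π' →
          ∫ z, quadCost z.1 z.2 ∂π ≤ ∫ z, quadCost z.1 z.2 ∂π') ∧
        ∀ f : BoundedContinuousFunction (E × E) ℝ,
          Tendsto (fun n ↦ ∫ z, f z ∂((μ (φ n)).map fun x ↦ (x, T (φ n) x)))
            atTop (𝓝 (∫ z, f z ∂π)) := by
  have hopt : ∀ k, IsOptimalPlan 2 (μ k) (ν k) ((μ k).map fun x ↦ (x, T k x)) := fun k ↦
    (hT k).isOptimalPlan (hμ k) (hν k) (hatom k)
  have hWμ' := tendsto_wassersteinEDist_of_tendsto_W2sq hμprob hμ hμlim hWμ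
  have hWν' := tendsto_wassersteinEDist_of_tendsto_W2sq hνprob hν hνlim hWν
  obtain ⟨φ, hφ, π, hπ, hπopt⟩ := exists_subseq_tendsto_isOptimalPlan (p := 2)
    (μ := fun k ↦ ⟨μ k, hμprob k⟩) (ν := fun k ↦ ⟨ν k, hνprob k⟩)
    (μlim := ⟨μlim, inferInstance⟩) (νlim := ⟨νlim, inferInstance⟩)
    (π := fun k ↦ ⟨_, (hopt k).1.isProbabilityMeasure⟩)
    one_le_two ENNReal.ofNat_ne_top hWμ' hWν' hopt
  exact ⟨φ, hφ, π, hπopt.1, fun _ ↦ hπopt.integral_quadCost_le hμlim hνlim,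
    ProbabilityMeasure.tendsto_iff_forall_integral_tendsto.1 hπ⟩

/-- If regular sources `μ_k` (finite second moments) converge to `μ` in
Wasserstein-2 and `T_k` is the (unique) optimal transport map from `μ_k` to `ν`, then
along a subsequence the induced plans `(Id × T_k)_# μ_k` converge weakly to an optimal
transport plan `π ∈ Π(μ,ν)` for the quadratic cost. -/
theorem statement3
    {H : Type*} [NormedAddCommGroup H] [InnerProductSpace ℝ H] [CompleteSpace H]
    [SecondCountableTopology H] [MeasurableSpace H] [BorelSpace H]
    (ν : Measure H) [IsProbabilityMeasure ν] (hν2 : HasFiniteSecondMoment ν)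
    (μ : ℕ → Measure H) (hprob : ∀ k, IsProbabilityMeasure (μ k))
    (hreg : ∀ k, IsRegularMeasure (μ k)) (h2 : ∀ k, HasFiniteSecondMoment (μ k))
    (T : ℕ → H → H) (hT : ∀ k, IsMongeMap (μ k) ν (T k))
    (μlim : Measure H) [IsProbabilityMeasure μlim] (hlim2 : HasFiniteSecondMoment μlim)
    (hW2 : Tendsto (fun k => W2sq (μ k) μlim) atTop (nhds 0)) :
    ∃ φ : ℕ → ℕ, StrictMono φ ∧
      ∃ π : Measure (H × H), IsCoupling μlim ν π ∧
        (∀ π' : Measure (H × H), IsCoupling μlim ν π' →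
          ∫ p, quadCost p.1 p.2 ∂π ≤ ∫ p, quadCost p.1 p.2 ∂π') ∧
        ∀ f : BoundedContinuousFunction (H × H) ℝ,
          Tendsto (fun n => ∫ p, f p ∂((μ (φ n)).map (fun x => (x, T (φ n) x))))
            atTop (nhds (∫ p, f p ∂π)) := by
  exact statement3_general hprob (fun k _ ↦ (hreg k).nullSingletonClass) h2 (fun _ ↦ inferInstance)
    (fun _ ↦ hν2) hT hlim2 hν2 hW2 (by simp only [W2sq_self, tendsto_const_nhds])

end
end

section
/- Let μ be a centered Gaussian measure on a separable Hilbert space H with covariance operator Q and Cameron–Martin space H_Q = Ran(Q^{1/2}). If H_Q is infinite-dimensional (equivalently, Q has infinitely many strictly positive eigenvalues), then μ(H_Q) = 0. -/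
open MeasureTheory ProbabilityTheory Filter Topology Metric
open scoped ENNReal NNReal

noncomputable section

local notation "⟪" x ", " y "⟫" => @inner ℝ _ _ x y

/-- The Cameron–Martin space of a covariance operator diagonalized as `Q e_k = λ_k e_k`:
`H_Q = Ran(Q^{1/2}) = {x : Σ_{λ_k>0} ⟨x,e_k⟩²/λ_k < ∞ and ⟨x,e_k⟩ = 0 whenever λ_k = 0}`. -/
def cameronMartin {H : Type*} [NormedAddCommGroup H] [InnerProductSpace ℝ H]
    (e : HilbertBasis ℕ ℝ H) (lam : ℕ → ℝ) : Set H :=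
  {x : H | (∀ k, lam k = 0 → ⟪x, e k⟫ = 0) ∧
    Summable (fun k => if lam k = 0 then (0 : ℝ) else ⟪x, e k⟫ ^ 2 / lam k)}

/-!
After division by its standard deviation, every coordinate `⟪x, e k⟫` with `0 < lam k` is a standard
Gaussian variable. On the Cameron–Martin space the squares of these variables are summable, so the
variables tend to `0`; but infinitely many variables with one common law cannot tend to a point that
is not an atom of that law, except on a null set.
-/

section CommonLaw

variable {ι Ω : Type*} {mΩ : MeasurableSpace Ω} {μ : Measure Ω} {l : Filter ι}
  [l.IsCountablyGenerated]

theorem measure_setOf_eventually_mem_le {s : ι → Set Ω} {a : ℝ≥0∞}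
    (hs : ∃ᶠ i in l, μ (s i) ≤ a) : μ {ω | ∀ᶠ i in l, ω ∈ s i} ≤ a := by
  obtain ⟨t, ht⟩ := l.exists_antitone_basis
  have h_union : {ω | ∀ᶠ i in l, ω ∈ s i} = ⋃ n, ⋂ i ∈ t n, s i := by
    ext ω
    simp only [ht.1.eventually_iff, true_and, Set.mem_ofPred_eq, Set.mem_iUnion, Set.mem_iInter]
  have h_mono : Monotone fun n => ⋂ i ∈ t n, s i := fun _ _ hmn =>
    Set.biInter_subset_biInter_left (ht.2 hmn)
  rw [h_union, h_mono.measure_iUnion]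
  refine iSup_le fun n => ?_
  obtain ⟨i, hi, hin⟩ := (hs.and_eventually (ht.mem n)).exists
  exact (measure_mono (Set.biInter_subset_of_mem hin)).trans hi

theorem ae_not_tendsto_of_frequently_hasLaw {E : Type*} [TopologicalSpace E] [MeasurableSpace E]
    [OpensMeasurableSpace E] {ν : Measure E} [ν.OuterRegular] {X : ι → Ω → E}
    (hX : ∃ᶠ i in l, HasLaw (X i) ν μ) {c : E} (hc : ν {c} = 0) :
    ∀ᵐ ω ∂μ, ¬ Tendsto (fun i => X i ω) l (𝓝 c) := by
  simp only [ae_iff, not_not]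
  refine le_antisymm (le_of_forall_gt fun ε hε => ?_) bot_le
  obtain ⟨U, hcU, hU_open, hUε⟩ := Set.exists_isOpen_lt_of_lt {c} ε (hc.trans_lt hε)
  have hU_mem : U ∈ 𝓝 c := hU_open.mem_nhds (hcU rfl)
  calc μ {ω | Tendsto (fun i => X i ω) l (𝓝 c)}
      ≤ μ {ω | ∀ᶠ i in l, ω ∈ X i ⁻¹' U} := measure_mono fun ω hω => hω.eventually_mem hU_mem
    _ ≤ ν U := measure_setOf_eventually_mem_le <|
        hX.mono fun i hi => (hi.measure_eq hU_open.measurableSet).le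
    _ < ε := hUε

end CommonLaw

theorem IsCenteredGaussianCov.hasLaw_inner_div_sqrt {E : Type*} [NormedAddCommGroup E]
    [InnerProductSpace ℝ E] [MeasurableSpace E] [OpensMeasurableSpace E] {μ : Measure E}
    {Q : E →L[ℝ] E} (hμ : IsCenteredGaussianCov μ Q) {h : E} (hh : 0 < ⟪Q h, h⟫) :
    HasLaw (fun x => ⟪x, h⟫ / √⟪Q h, h⟫) (gaussianReal 0 1) μ := by
  have h_law : HasLaw (fun x => ⟪x, h⟫) (gaussianReal 0 ⟪Q h, h⟫.toNNReal) μ :=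
    ⟨by fun_prop, hμ.2 h⟩
  convert gaussianReal_div_const h_law √⟪Q h, h⟫ using 2
  · exact (zero_div _).symm
  · ext
    simp [Real.sq_sqrt hh.le, hh.le, hh.ne']

theorem tendsto_inner_div_sqrt_of_mem_cameronMartin {H : Type*} [NormedAddCommGroup H]
    [InnerProductSpace ℝ H] {e : HilbertBasis ℕ ℝ H} {lam : ℕ → ℝ} {x : H}
    (hx : x ∈ cameronMartin e lam) :
    Tendsto (fun k => ⟪x, e k⟫ / √(lam k)) atTop (𝓝 0) := by
  have h_summable : Summable fun k => ⟪x, e k⟫ ^ 2 / lam k :=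
    hx.2.congr fun k => by split_ifs with hk <;> simp [hk]
  have h_sqrt := h_summable.tendsto_atTop_zero.sqrt
  simp only [Real.sqrt_div (sq_nonneg _), Real.sqrt_sq_eq_abs, Real.sqrt_zero] at h_sqrt
  rw [tendsto_zero_iff_abs_tendsto_zero]
  simpa only [Function.comp_def, abs_div, abs_of_nonneg (Real.sqrt_nonneg _)] using h_sqrt

/-- If the Cameron–Martin space of a centered Gaussian measure `μ` with
covariance `Q` is infinite-dimensional (i.e. `Q` has infinitely many strictly positive
eigenvalues), then `μ(H_Q) = 0`. -/
theorem statement10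
    {H : Type*} [NormedAddCommGroup H] [InnerProductSpace ℝ H] [CompleteSpace H]
    [SecondCountableTopology H] [MeasurableSpace H] [BorelSpace H]
    (e : HilbertBasis ℕ ℝ H) (lam : ℕ → ℝ) (hlam : ∀ k, 0 ≤ lam k) (hsum : Summable lam)
    (Q : H →L[ℝ] H) (hQ : ∀ k, Q (e k) = lam k • e k)
    (hQsa : ∀ x y : H, ⟪Q x, y⟫ = ⟪x, Q y⟫) (hQpos : ∀ x : H, 0 ≤ ⟪Q x, x⟫)
    (μ : Measure H) (hμ : IsCenteredGaussianCov μ Q)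
    (hinf : {k : ℕ | 0 < lam k}.Infinite) :
    μ (cameronMartin e lam) = 0 := by
  have h_var (k : ℕ) : ⟪Q (e k), e k⟫ = lam k := by
    rw [hQ, real_inner_smul_left, real_inner_self_eq_norm_sq, e.orthonormal.1 k, one_pow, mul_one]
  have h_law : ∃ᶠ k in atTop, HasLaw (fun x => ⟪x, e k⟫ / √(lam k)) (gaussianReal 0 1) μ :=
    (Nat.frequently_atTop_iff_infinite.2 hinf).mono fun k hk => by
      rw [← h_var k] at hk ⊢
      exact hμ.hasLaw_inner_div_sqrt hk
  have := nullSingletonClass_gaussianReal (μ := 0) one_ne_zero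
  have h_not_tendsto := ae_not_tendsto_of_frequently_hasLaw h_law (measure_singleton 0)
  exact measure_mono_null
    (fun _ hx => not_not.2 (tendsto_inner_div_sqrt_of_mem_cameronMartin hx)) h_not_tendsto

end
end
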